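/- For every ε > 0 there exists δ > 0 (which may be taken to be 2^{−O(1/ε)}) such that for every bipartite graph G with parts X and Y satisfying |X| = n and |Y| = 2n: if im(G) < (1 − ε)·n, then log₂ mis(G) < (1 − δ)·n. -/

import Mathlib

/-- A set of vertices is independent in `G` if it spans no edge. -/
def IsIndepSet {V : Type*} (G : SimpleGraph V) (s : Set V) : Prop :=
  ∀ ⦃x⦄, x ∈ s → ∀ ⦃y⦄, y ∈ s → ¬ G.Adj x y

/-- A maximal independent set. -/
def IsMaxIndepSet {V : Type*} (G : SimpleGraph V) (s : Set V) : Prop :=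
  IsIndepSet G s ∧ ∀ t, IsIndepSet G t → s ⊆ t → s = t

/-- `mis G` is the number of maximal independent sets of `G`. -/
noncomputable def mis {V : Type*} (G : SimpleGraph V) : ℕ :=
  Nat.card {s : Set V // IsMaxIndepSet G s}

/-- `S` induces a triangle matching: within `S`, every vertex has exactly two
neighbours, and these two neighbours are adjacent; so `G[S]` is a vertex-disjoint
union of triangles. -/
def IsInducedTriangleMatching {V : Type*} (G : SimpleGraph V) (S : Finset V) : Prop :=
  ∀ x ∈ S, ∃ y ∈ S, ∃ z ∈ S, G.Adj x y ∧ G.Adj x z ∧ G.Adj y z ∧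
    ∀ w ∈ S, G.Adj x w → w = y ∨ w = z

/-- `itm G`: the largest number of triangles in an induced triangle matching. -/
noncomputable def itm {V : Type*} (G : SimpleGraph V) : ℕ :=
  sSup {k | ∃ S : Finset V, S.card = 3 * k ∧ IsInducedTriangleMatching G S}

/-- `S` induces a matching: within `S`, every vertex has exactly one neighbour. -/
def IsInducedMatching {V : Type*} (G : SimpleGraph V) (S : Finset V) : Prop :=
  ∀ x ∈ S, ∃ y ∈ S, G.Adj x y ∧ ∀ z ∈ S, G.Adj x z → z = y

/-- `im G`: the largest number of edges in an induced matching. -/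
noncomputable def im {V : Type*} (G : SimpleGraph V) : ℕ :=
  sSup {k | ∃ S : Finset V, S.card = 2 * k ∧ IsInducedMatching G S}

/-- The neighbourhood of a set of vertices. -/
def nbhd {V : Type*} (G : SimpleGraph V) (S : Set V) : Set V :=
  {y | ∃ x ∈ S, G.Adj x y}

/-- A set `J` is irredundant if no member's neighbourhood is covered by the
neighbourhoods of the other members. -/
def Irredundant {V : Type*} (G : SimpleGraph V) (J : Set V) : Prop :=
  ∀ x ∈ J, ¬ (G.neighborSet x ⊆ nbhd G (J \ {x}))

/-- `irr G X`: the number of irredundant subsets of `X`. -/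
noncomputable def irr {V : Type*} (G : SimpleGraph V) (X : Set V) : ℕ :=
  Nat.card {J : Set V // J ⊆ X ∧ Irredundant G J}

/-!
A maximal independent set of a bipartite graph is determined by the neighbourhood of its trace on
`X`, and every trace contains an irredundant set with the same neighbourhood; so `mis G` is at most
the number of irredundant subsets of `X`, sets in which each element has a private neighbour in `Y`.
An irredundant set spans an induced matching with its private neighbours, hence has at most `im G`
elements.

If all degrees are bounded, many `x ∈ X` are not the only neighbour of any vertex of `Y` and are
expected to have boundedly many private neighbours in a random subset of `X`. By the Harris
inequality such an `x` lies in a random subset without a private neighbour with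
probability bounded below. This event depends only on the elements at distance at most two from
`x`, so a linear number of disjoint such neighbourhoods gives an exponential saving over
`2 ^ #X`.

Large degrees in `Y` are removed by branching: for an irredundant `J`, choose greedily a set `T` of
private neighbours, each covering many new elements of `X`. The covered part `U` meets `J` in at
most `#T` elements, far fewer than a typical subset of `U` would have, and this gain beats the
union bound over `T`.
-/

section TracesOfSetFamilies

open Finset

variable {α ι : Type*}

theorem pow_mul_card_filter_card_le {x : ℝ} (hx₀ : 0 ≤ x) (hx₁ : x ≤ 1) (U : Finset α) (t : ℕ) :
    x ^ t * #{K ∈ U.powerset | #K ≤ t} ≤ (1 + x) ^ #U := by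
  calc x ^ t * #{K ∈ U.powerset | #K ≤ t} = ∑ K ∈ U.powerset with #K ≤ t, x ^ t := by
        rw [sum_const, nsmul_eq_mul, mul_comm]
    _ ≤ ∑ K ∈ U.powerset with #K ≤ t, x ^ #K :=
        sum_le_sum fun K hK ↦ pow_le_pow_of_le_one hx₀ hx₁ (mem_filter.1 hK).2
    _ ≤ ∑ K ∈ U.powerset, x ^ #K :=
        sum_le_sum_of_subset_of_nonneg (filter_subset _ _) fun _ _ _ ↦ pow_nonneg hx₀ _
    _ = (1 + x) ^ #U := by simpa [add_comm x] using sum_pow_mul_eq_add_pow x 1 U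

theorem card_filter_lt_mul_le_sum {R : Type*} [Semiring R] [LinearOrder R] [IsStrictOrderedRing R]
    {X : Finset α} {f : α → R} (hf : ∀ x ∈ X, 0 ≤ f x) (a : R) :
    #{x ∈ X | a < f x} * a ≤ ∑ x ∈ X, f x := by
  rw [← nsmul_eq_mul]
  exact (card_nsmul_le_sum _ f a fun x hx ↦ (mem_filter.1 hx).2.le).trans
    (sum_le_sum_of_subset_of_nonneg (filter_subset _ _) fun x hx _ ↦ hf x hx)

theorem exists_pairwiseDisjoint_subset_card_le {B : Finset α} {S : α → Finset α} {L : ℕ}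
    (hself : ∀ x ∈ B, x ∈ S x) (hsymm : ∀ x ∈ B, ∀ z ∈ S x, x ∈ S z)
    (hS : ∀ x ∈ B, ∀ z ∈ S x, #(S z) ≤ L) :
    ∃ I ⊆ B, (I : Set α).PairwiseDisjoint S ∧ #B ≤ #I * L ^ 2 := by
  classical
  obtain ⟨I, hI, hmax⟩ := exists_max_image
    (B.powerset.filter fun I : Finset α ↦ (I : Set α).PairwiseDisjoint S) card ⟨∅, by simp⟩
  simp only [mem_filter, mem_powerset] at hI hmax
  have hcover : B ⊆ I.biUnion fun i ↦ (S i).biUnion S := by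
    intro x hx
    by_contra hfar
    simp only [mem_biUnion, not_exists, not_and] at hfar
    have hxI : x ∉ I := fun hxI ↦ hfar x hxI x (hself x hx) (hself x hx)
    have hdisj : ∀ i ∈ I, Disjoint (S x) (S i) := fun i hi ↦
      disjoint_left.2 fun z hzx hzi ↦ hfar i hi z hzi (hsymm x hx z hzx)
    have hle := hmax (insert x I) ⟨insert_subset hx hI.1, by
      rw [coe_insert]
      exact hI.2.insert fun i hi _ ↦ hdisj i hi⟩
    rw [card_insert_of_notMem hxI] at hle
    lia
  refine ⟨I, hI.1, hI.2, (card_le_card hcover).trans (card_biUnion_le_card_mul _ _ _ fun i hi ↦ ?_)⟩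
  calc #((S i).biUnion S) ≤ #(S i) * L := card_biUnion_le_card_mul _ _ L (hS i (hI.1 hi))
    _ ≤ L ^ 2 := pow_two L ▸ Nat.mul_le_mul_right L (hS i (hI.1 hi) i (hself i (hI.1 hi)))

variable [DecidableEq α]

theorem card_le_card_mul_card_of_inter_of_sdiff {F G H : Finset (Finset α)} {U : Finset α}
    (hG : ∀ J ∈ F, J ∩ U ∈ G) (hH : ∀ J ∈ F, J \ U ∈ H) : #F ≤ #G * #H := by
  rw [← card_product]
  refine card_le_card_of_injOn (fun J ↦ (J ∩ U, J \ U))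
    (fun J hJ ↦ mem_product.2 ⟨hG J hJ, hH J hJ⟩) fun J _ K _ hJK ↦ ?_
  rw [← sdiff_union_inter J U, ← sdiff_union_inter K U, (Prod.mk.inj hJK).1, (Prod.mk.inj hJK).2]

theorem card_le_two_pow_mul_pow_of_card_traces_le {q : ℝ} (hq : 0 ≤ q) {I : Finset ι}
    {S : ι → Finset α} (hdisj : (I : Set ι).PairwiseDisjoint S) {X : Finset α}
    {F : Finset (Finset α)} (hF : F ⊆ X.powerset) (hS : ∀ i ∈ I, S i ⊆ X)
    (htrace : ∀ i ∈ I, (#(F.image (· ∩ S i)) : ℝ) ≤ q * 2 ^ #(S i)) :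
    (#F : ℝ) ≤ 2 ^ #X * q ^ #I := by
  classical
  induction I using Finset.induction_on generalizing X F with
  | empty => simpa using mod_cast (card_le_card hF).trans_eq (card_powerset X)
  | insert i I hi ih =>
    have hdisj_i : ∀ j ∈ I, Disjoint (S i) (S j) := fun j hj ↦
      hdisj (mem_insert_self i I) (mem_insert_of_mem hj) fun h ↦ hi (h ▸ hj)
    have hsplit : #F ≤ #(F.image (· ∩ S i)) * #(F.image (· \ S i)) :=
      card_le_card_mul_card_of_inter_of_sdiff (fun _ ↦ mem_image_of_mem _)
        (fun _ ↦ mem_image_of_mem _)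
    have hrest : (#(F.image (· \ S i)) : ℝ) ≤ 2 ^ #(X \ S i) * q ^ #I := by
      refine ih (hdisj.subset (coe_subset.2 (subset_insert i I))) ?_
        (fun j hj ↦ subset_sdiff.2 ⟨hS j (mem_insert_of_mem hj), (hdisj_i j hj).symm⟩)
        fun j hj ↦ ?_
      · exact image_subset_iff.2 fun J hJ ↦
          mem_powerset.2 (sdiff_subset_sdiff (mem_powerset.1 (hF hJ)) Subset.rfl)
      · have htrace_j : (F.image (· \ S i)).image (· ∩ S j) = F.image (· ∩ S j) := by
          rw [image_image]
          refine image_congr fun J _ ↦ ?_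
          rw [Function.comp_apply, sdiff_inter_right_comm, sdiff_eq_self_of_disjoint]
          exact (hdisj_i j hj).symm.mono_left inter_subset_right
        exact htrace_j ▸ htrace j (mem_insert_of_mem hj)
    have hcard : #(X \ S i) + #(S i) = #X :=
      card_sdiff_add_card_eq_card (hS i (mem_insert_self i I))
    calc (#F : ℝ) ≤ #(F.image (· ∩ S i)) * #(F.image (· \ S i)) := mod_cast hsplit
      _ ≤ (q * 2 ^ #(S i)) * (2 ^ #(X \ S i) * q ^ #I) := by
        gcongr
        exact htrace i (mem_insert_self i I)
      _ = 2 ^ #X * q ^ #(insert i I) := by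
        rw [← hcard, card_insert_of_notMem hi, pow_add, pow_succ]
        ring

end TracesOfSetFamilies

section HittingSets

open Finset

variable {α β : Type*} [DecidableEq α]

theorem card_mul_card_le_two_pow_mul_card_inter {Z : Finset α} {F G : Finset (Finset α)}
    (hF : F ⊆ Z.powerset) (hG : G ⊆ Z.powerset)
    (hF_up : ∀ J ∈ F, ∀ K ⊆ Z, J ⊆ K → K ∈ F) (hG_up : ∀ J ∈ G, ∀ K ⊆ Z, J ⊆ K → K ∈ G) :
    #F * #G ≤ 2 ^ #Z * #(F ∩ G) := by
  rw [← card_powerset]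
  refine (le_card_infs_mul_card_sups F G).trans (Nat.mul_le_mul (card_le_card ?_) (card_le_card ?_))
  · refine infs_subset_iff.2 fun J hJ K _ ↦ mem_powerset.2 ?_
    exact inter_subset_left.trans (mem_powerset.1 (hF hJ))
  · refine sups_subset_iff.2 fun J hJ K hK ↦ ?_
    have hZ : J ∪ K ⊆ Z := union_subset (mem_powerset.1 (hF hJ)) (mem_powerset.1 (hG hK))
    exact mem_inter.2 ⟨hF_up J hJ _ hZ subset_union_left, hG_up K hK _ hZ subset_union_right⟩

/-- The subsets of `Z` that meet `B y` for every `y ∈ s`. -/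
def hittingSets (B : β → Finset α) (s : Finset β) (Z : Finset α) : Finset (Finset α) :=
  {K ∈ Z.powerset | ∀ y ∈ s, (B y ∩ K).Nonempty}

variable {B : β → Finset α} {s : Finset β} {Z : Finset α}

theorem mem_hittingSets {K : Finset α} :
    K ∈ hittingSets B s Z ↔ K ⊆ Z ∧ ∀ y ∈ s, (B y ∩ K).Nonempty := by
  rw [hittingSets, mem_filter, mem_powerset]

theorem hittingSets_subset_powerset : hittingSets B s Z ⊆ Z.powerset := filter_subset _ _

theorem mem_hittingSets_of_subset {J K : Finset α} (hJ : J ∈ hittingSets B s Z) (hK : K ⊆ Z)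
    (hJK : J ⊆ K) : K ∈ hittingSets B s Z :=
  mem_hittingSets.2 ⟨hK, fun y hy ↦
    ((mem_hittingSets.1 hJ).2 y hy).mono (inter_subset_inter_left hJK)⟩

theorem card_hittingSets_singleton {y : β} (hy : B y ⊆ Z) :
    (#(hittingSets B {y} Z) : ℝ) = 2 ^ #Z * (1 - (1 / 2) ^ #(B y)) := by
  have hmiss : {K ∈ Z.powerset | ¬ ∀ i ∈ ({y} : Finset β), (B i ∩ K).Nonempty}
      = (Z \ B y).powerset := by
    ext K
    simp only [mem_filter, mem_powerset, mem_singleton, forall_eq, not_nonempty_iff_eq_empty,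
      subset_sdiff, disjoint_comm (a := K), disjoint_iff_inter_eq_empty]
  have hcount := card_filter_add_card_filter_not (s := Z.powerset)
    fun K ↦ ∀ i ∈ ({y} : Finset β), (B i ∩ K).Nonempty
  rw [hmiss, card_powerset, card_powerset] at hcount
  have hpow : (2 : ℝ) ^ #Z = 2 ^ #(Z \ B y) * 2 ^ #(B y) := by
    rw [← pow_add, card_sdiff_add_card_eq_card hy]
  have hcount' : (#(hittingSets B {y} Z) : ℝ) + 2 ^ #(Z \ B y) = 2 ^ #Z := mod_cast hcount
  rw [eq_sub_of_add_eq hcount', hpow, one_div, inv_pow]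
  field_simp

theorem two_pow_mul_prod_le_card_hittingSets (hB : ∀ y ∈ s, B y ⊆ Z) :
    2 ^ #Z * ∏ y ∈ s, (1 - (1 / 2 : ℝ) ^ #(B y)) ≤ #(hittingSets B s Z) := by
  classical
  induction s using Finset.induction_on with
  | empty => simp [hittingSets]
  | insert b s hb ih =>
    rw [forall_mem_insert] at hB
    have hinter : hittingSets B (insert b s) Z = hittingSets B {b} Z ∩ hittingSets B s Z := by
      ext K
      simp only [mem_inter, mem_hittingSets, forall_mem_insert, mem_singleton, forall_eq]
      tauto
    have hharris : #(hittingSets B {b} Z) * #(hittingSets B s Z)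
        ≤ 2 ^ #Z * #(hittingSets B (insert b s) Z) :=
      hinter ▸ card_mul_card_le_two_pow_mul_card_inter hittingSets_subset_powerset
        hittingSets_subset_powerset (fun _ hJ _ ↦ mem_hittingSets_of_subset hJ)
        (fun _ hJ _ ↦ mem_hittingSets_of_subset hJ)
    have hcorr : (#(hittingSets B {b} Z) : ℝ) * #(hittingSets B s Z)
        ≤ 2 ^ #Z * #(hittingSets B (insert b s) Z) := mod_cast hharris
    rw [card_hittingSets_singleton hB.1, mul_assoc, mul_le_mul_iff_right₀ (by positivity)] at hcorr
    have hnonneg : 0 ≤ 1 - (1 / 2 : ℝ) ^ #(B b) :=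
      sub_nonneg.2 (pow_le_one₀ (by norm_num) (by norm_num))
    rw [prod_insert hb, mul_left_comm]
    exact (mul_le_mul_of_nonneg_left (ih hB.2) hnonneg).trans hcorr

theorem half_rpow_two_mul_le_one_sub {t : ℝ} (ht₀ : 0 ≤ t) (ht : t ≤ 1 / 2) :
    (1 / 2 : ℝ) ^ (2 * t) ≤ 1 - t := by
  have hbernoulli := rpow_one_add_le_one_add_mul_self (s := -(1 / 2)) (p := 2 * t)
    (by norm_num) (by linarith) (by linarith)
  norm_num at hbernoulli ⊢
  linarith

theorem two_pow_mul_half_rpow_le_card_hittingSets (hB : ∀ y ∈ s, B y ⊆ Z)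
    (hne : ∀ y ∈ s, (B y).Nonempty) :
    2 ^ #Z * (1 / 2 : ℝ) ^ (2 * ∑ y ∈ s, (1 / 2 : ℝ) ^ #(B y)) ≤ #(hittingSets B s Z) := by
  refine le_trans ?_ (two_pow_mul_prod_le_card_hittingSets hB)
  rw [mul_sum, Real.rpow_sum_of_pos (by norm_num)]
  gcongr with y hy
  refine half_rpow_two_mul_le_one_sub (by positivity) ?_
  exact pow_le_of_le_one (by norm_num) (by norm_num) (card_ne_zero.2 (hne y hy))

end HittingSets

section IrredundantSubsets

open Finset

variable {α β : Type*} [DecidableEq α]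

/-- The irredundant subsets `J` of `X` for the set system `(A y)_{y ∈ Y}`: every `x ∈ J` has a
private index `y ∈ Y`, one with `A y ∩ J = {x}`. Here `A y` stands for the neighbourhood of `y` in
a bipartite graph; it need not be contained in `X`, so that `X` and `Y` can be shrunk with `A`
fixed. -/
def irredundantSubsets (A : β → Finset α) (Y : Finset β) (X : Finset α) : Finset (Finset α) :=
  {J ∈ X.powerset | ∀ x ∈ J, ∃ y ∈ Y, A y ∩ J = {x}}

variable {A : β → Finset α} {Y Y' : Finset β} {X X' : Finset α}

theorem mem_irredundantSubsets {J : Finset α} :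
    J ∈ irredundantSubsets A Y X ↔ J ⊆ X ∧ ∀ x ∈ J, ∃ y ∈ Y, A y ∩ J = {x} := by
  rw [irredundantSubsets, mem_filter, mem_powerset]

theorem irredundantSubsets_subset_powerset : irredundantSubsets A Y X ⊆ X.powerset :=
  filter_subset _ _

theorem card_irredundantSubsets_le_two_pow : #(irredundantSubsets A Y X) ≤ 2 ^ #X :=
  card_powerset X ▸ card_le_card irredundantSubsets_subset_powerset

theorem irredundantSubsets_mono (hY : Y' ⊆ Y) (hX : X' ⊆ X) :
    irredundantSubsets A Y' X' ⊆ irredundantSubsets A Y X := by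
  intro J hJ
  rw [mem_irredundantSubsets] at hJ ⊢
  exact ⟨hJ.1.trans hX, fun x hx ↦ (hJ.2 x hx).imp fun y hy ↦ ⟨hY hy.1, hy.2⟩⟩

theorem inter_eq_singleton_of_subset {s J K : Finset α} {x : α} (h : s ∩ J = {x}) (hK : K ⊆ J)
    (hx : x ∈ K) : s ∩ K = {x} := by
  have hxs : x ∈ s := (mem_inter.1 (h.symm ▸ mem_singleton_self x)).1
  rw [eq_singleton_iff_unique_mem]
  refine ⟨mem_inter.2 ⟨hxs, hx⟩, fun z hz ↦ mem_singleton.1 ?_⟩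
  exact h ▸ inter_subset_inter_left hK hz

theorem mem_irredundantSubsets_of_subset {J K : Finset α} (hJ : J ∈ irredundantSubsets A Y X)
    (hKJ : K ⊆ J) (hK : K ⊆ X') (hY : ∀ y ∈ Y, #(A y ∩ J) = 1 → y ∈ Y') :
    K ∈ irredundantSubsets A Y' X' := by
  refine mem_irredundantSubsets.2 ⟨hK, fun x hx ↦ ?_⟩
  obtain ⟨y, hy, hyx⟩ := (mem_irredundantSubsets.1 hJ).2 x (hKJ hx)
  exact ⟨y, hY y hy (card_eq_one.2 ⟨x, hyx⟩), inter_eq_singleton_of_subset hyx hKJ hx⟩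

theorem filter_private_mem_irredundantSubsets :
    {x ∈ X | ∃ y ∈ Y, A y ∩ X = {x}} ∈ irredundantSubsets A Y X := by
  refine mem_irredundantSubsets.2 ⟨filter_subset _ _, fun x hx ↦ ?_⟩
  obtain ⟨y, hy, hyx⟩ := (mem_filter.1 hx).2
  exact ⟨y, hy, inter_eq_singleton_of_subset hyx (filter_subset _ _) hx⟩

theorem card_irredundantSubsets_le_two_pow_mul_sdiff (R : Finset α) :
    #(irredundantSubsets A Y X) ≤ 2 ^ #R * #(irredundantSubsets A Y (X \ R)) := by
  rw [← card_powerset]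
  refine card_le_card_mul_card_of_inter_of_sdiff (U := R)
    (fun J _ ↦ mem_powerset.2 inter_subset_right) fun J hJ ↦ ?_
  refine mem_irredundantSubsets_of_subset hJ sdiff_subset ?_ fun _ hy _ ↦ hy
  exact sdiff_subset_sdiff (mem_irredundantSubsets.1 hJ).1 Subset.rfl

/-- The expected number of private indices of `x` in a uniformly random subset of `X` conditioned
on containing `x`: the index `y` is private when no other element of `A y ∩ X` is chosen. -/
noncomputable def expectedPrivate (A : β → Finset α) (Y : Finset β) (X : Finset α) (x : α) : ℝ :=
  ∑ y ∈ Y with x ∈ A y, (1 / 2) ^ #((A y ∩ X).erase x)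

theorem expectedPrivate_nonneg (x : α) : 0 ≤ expectedPrivate A Y X x :=
  sum_nonneg fun _ _ ↦ by positivity

theorem expectedPrivate_congr {x : α} (h : ∀ y ∈ Y, x ∈ A y → A y ∩ X = A y ∩ X') :
    expectedPrivate A Y X x = expectedPrivate A Y X' x :=
  sum_congr rfl fun y hy ↦ by rw [h y (mem_filter.1 hy).1 (mem_filter.1 hy).2]

theorem sum_sum_filter_mem {M : Type*} [AddCommMonoid M] (f : α → β → M) :
    ∑ x ∈ X, ∑ y ∈ Y with x ∈ A y, f x y = ∑ y ∈ Y, ∑ x ∈ A y ∩ X, f x y :=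
  sum_comm' fun x y ↦ by simp only [mem_filter, mem_inter]; tauto

theorem mul_half_pow_pred_le_one (d : ℕ) : d * (1 / 2 : ℝ) ^ (d - 1) ≤ 1 := by
  have hd : d ≤ 2 ^ (d - 1) := Nat.le_of_pred_lt Nat.lt_two_pow_self
  rw [one_div, inv_pow, ← div_eq_mul_inv, div_le_one (by positivity)]
  exact_mod_cast hd

theorem sum_expectedPrivate_le : ∑ x ∈ X, expectedPrivate A Y X x ≤ #Y := by
  calc ∑ x ∈ X, expectedPrivate A Y X x
      = ∑ y ∈ Y, ∑ x ∈ A y ∩ X, (1 / 2 : ℝ) ^ #((A y ∩ X).erase x) := sum_sum_filter_mem _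
    _ = ∑ y ∈ Y, #(A y ∩ X) * (1 / 2 : ℝ) ^ (#(A y ∩ X) - 1) := by
        refine sum_congr rfl fun y _ ↦ ?_
        rw [sum_congr rfl fun x hx ↦ by rw [card_erase_of_mem hx], sum_const, nsmul_eq_mul]
    _ ≤ ∑ y ∈ Y, 1 := sum_le_sum fun y _ ↦ mul_half_pow_pred_le_one _
    _ = #Y := by simp

theorem card_hittingSets_erase_le {S : Finset α} {x : α} (hx : x ∈ S) :
    #(hittingSets (fun y ↦ (A y ∩ S).erase x) {y ∈ Y | x ∈ A y} (S.erase x)) ≤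
      #{J ∈ S.powerset | ¬ (x ∈ J → ∃ y ∈ Y, A y ∩ J = {x})} := by
  refine card_le_card_of_injOn (insert x) (fun K hK ↦ ?_) fun K hK L hL hKL ↦ ?_
  · obtain ⟨hKS, hhit⟩ := mem_hittingSets.1 hK
    refine mem_coe.2 (mem_filter.2 ⟨mem_powerset.2 (insert_subset hx
      (hKS.trans (erase_subset x S))), fun hprivate ↦ ?_⟩)
    obtain ⟨y, hy, hyx⟩ := hprivate (mem_insert_self x K)
    have hxy : x ∈ A y := (mem_inter.1 (hyx.symm ▸ mem_singleton_self x)).1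
    obtain ⟨z, hz⟩ := hhit y (mem_filter.2 ⟨hy, hxy⟩)
    simp only [mem_inter, mem_erase] at hz
    exact hz.1.1 (mem_singleton.1 (hyx ▸ mem_inter.2 ⟨hz.1.2.1, mem_insert_of_mem hz.2⟩))
  · have hx_notMem : ∀ K ∈ hittingSets (fun y ↦ (A y ∩ S).erase x) {y ∈ Y | x ∈ A y} (S.erase x),
        x ∉ K := fun K hK hxK ↦ notMem_erase x S ((mem_hittingSets.1 hK).1 hxK)
    rw [← erase_insert (hx_notMem K hK), ← erase_insert (hx_notMem L hL), hKL]

theorem card_filter_private_le {S : Finset α} {x : α} (hx : x ∈ S)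
    (hnot : ∀ y ∈ Y, A y ∩ S ≠ {x}) :
    (#{J ∈ S.powerset | x ∈ J → ∃ y ∈ Y, A y ∩ J = {x}} : ℝ) ≤
      (1 - 1 / 2 * (1 / 2) ^ (2 * expectedPrivate A Y S x)) * 2 ^ #S := by
  have hcount := card_filter_add_card_filter_not (s := S.powerset)
    fun J ↦ x ∈ J → ∃ y ∈ Y, A y ∩ J = {x}
  rw [card_powerset] at hcount
  have hcount' : (#{J ∈ S.powerset | x ∈ J → ∃ y ∈ Y, A y ∩ J = {x}} : ℝ) +
      #{J ∈ S.powerset | ¬ (x ∈ J → ∃ y ∈ Y, A y ∩ J = {x})} = 2 ^ #S := mod_cast hcount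
  have hhit : 2 ^ #(S.erase x) * (1 / 2 : ℝ) ^ (2 * expectedPrivate A Y S x) ≤
      #(hittingSets (fun y ↦ (A y ∩ S).erase x) {y ∈ Y | x ∈ A y} (S.erase x)) := by
    refine two_pow_mul_half_rpow_le_card_hittingSets
      (fun y _ ↦ erase_subset_erase x inter_subset_right) fun y hy ↦ ?_
    rw [mem_filter] at hy
    exact (nontrivial_iff_ne_singleton (mem_inter.2 ⟨hy.2, hx⟩)).2 (hnot y hy.1) |>.erase_nonempty
  have hbad := hhit.trans (Nat.cast_le.2 (card_hittingSets_erase_le hx))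
  have hpow : (2 : ℝ) ^ #S = 2 ^ #(S.erase x) * 2 := by rw [← card_erase_add_one hx, pow_succ]
  rw [hpow] at hcount' ⊢
  linarith

/-- The elements of `X` that are `x` itself or share some `A y`, `y ∈ Y`, with `x`. Whether `x` has
a private index in `J ⊆ X` depends only on the trace of `J` on the cluster of `x`. -/
def cluster (A : β → Finset α) (Y : Finset β) (X : Finset α) (x : α) : Finset α :=
  {z ∈ X | z = x ∨ ∃ y ∈ Y, x ∈ A y ∧ z ∈ A y}

theorem cluster_subset (x : α) : cluster A Y X x ⊆ X := filter_subset _ _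

theorem mem_cluster_self {x : α} (hx : x ∈ X) : x ∈ cluster A Y X x :=
  mem_filter.2 ⟨hx, Or.inl rfl⟩

theorem mem_cluster_symm {x z : α} (hx : x ∈ X) (hz : z ∈ cluster A Y X x) :
    x ∈ cluster A Y X z :=
  mem_filter.2 ⟨hx, (mem_filter.1 hz).2.imp Eq.symm
    fun ⟨y, hy, hxy, hzy⟩ ↦ ⟨y, hy, hzy, hxy⟩⟩

theorem inter_cluster {x : α} {y : β} (hy : y ∈ Y) (hxy : x ∈ A y) :
    A y ∩ cluster A Y X x = A y ∩ X := by
  ext z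
  simp only [cluster, mem_inter, mem_filter]
  exact ⟨fun hz ↦ ⟨hz.1, hz.2.1⟩, fun hz ↦ ⟨hz.1, hz.2, Or.inr ⟨y, hy, hxy, hz.1⟩⟩⟩

theorem card_cluster_le {x : α} {D e : ℕ} (hD : ∀ y ∈ Y, #(A y ∩ X) ≤ D)
    (he : #{y ∈ Y | x ∈ A y} ≤ e) : #(cluster A Y X x) ≤ 1 + e * D := by
  have hcover : cluster A Y X x ⊆ insert x ({y ∈ Y | x ∈ A y}.biUnion fun y ↦ A y ∩ X) := by
    intro z hz
    obtain ⟨hzX, rfl | ⟨y, hy, hxy, hzy⟩⟩ := mem_filter.1 hz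
    · exact mem_insert_self z _
    · exact mem_insert_of_mem (mem_biUnion.2 ⟨y, mem_filter.2 ⟨hy, hxy⟩, mem_inter.2 ⟨hzy, hzX⟩⟩)
  calc #(cluster A Y X x)
      ≤ #({y ∈ Y | x ∈ A y}.biUnion fun y ↦ A y ∩ X) + 1 :=
        (card_le_card hcover).trans (card_insert_le _ _)
    _ ≤ #{y ∈ Y | x ∈ A y} * D + 1 := by
        gcongr
        exact card_biUnion_le_card_mul _ _ D fun y hy ↦ hD y (mem_filter.1 hy).1
    _ ≤ 1 + e * D := by rw [add_comm]; gcongr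

theorem card_irredundantSubsets_le_of_disjoint_clusters {I : Finset α} {w : ℝ} (hI : I ⊆ X)
    (hdisj : (I : Set α).PairwiseDisjoint (cluster A Y X))
    (hnot : ∀ x ∈ I, ∀ y ∈ Y, A y ∩ X ≠ {x}) (hw : ∀ x ∈ I, expectedPrivate A Y X x ≤ w)
    (hw₀ : 0 ≤ w) :
    (#(irredundantSubsets A Y X) : ℝ) ≤ 2 ^ #X * (1 - 1 / 2 * (1 / 2) ^ (2 * w)) ^ #I := by
  have hhalf : (1 / 2 : ℝ) ^ (2 * w) ≤ 1 :=
    Real.rpow_le_one (by norm_num) (by norm_num) (by linarith)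
  refine card_le_two_pow_mul_pow_of_card_traces_le (by linarith) hdisj
    irredundantSubsets_subset_powerset (fun x _ ↦ cluster_subset x) fun x hx ↦ ?_
  have htrace : (irredundantSubsets A Y X).image (· ∩ cluster A Y X x) ⊆
      {J ∈ (cluster A Y X x).powerset | x ∈ J → ∃ y ∈ Y, A y ∩ J = {x}} := by
    refine image_subset_iff.2 fun J hJ ↦
      mem_filter.2 ⟨mem_powerset.2 inter_subset_right, fun hxJ ↦ ?_⟩
    obtain ⟨y, hy, hyx⟩ := (mem_irredundantSubsets.1 hJ).2 x (mem_inter.1 hxJ).1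
    exact ⟨y, hy, inter_eq_singleton_of_subset hyx inter_subset_left hxJ⟩
  have hnot' : ∀ y ∈ Y, A y ∩ cluster A Y X x ≠ {x} := fun y hy hyx ↦ by
    have hxy : x ∈ A y := (mem_inter.1 (hyx.symm ▸ mem_singleton_self x)).1
    exact hnot x hx y hy (inter_cluster hy hxy ▸ hyx)
  have hlocal := card_filter_private_le (mem_cluster_self (hI hx)) hnot'
  rw [expectedPrivate_congr fun y hy hxy ↦ inter_cluster hy hxy] at hlocal
  refine (Nat.cast_le.2 (card_le_card htrace)).trans (hlocal.trans ?_)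
  gcongr ?_ * 2 ^ _
  have hmono : (1 / 2 : ℝ) ^ (2 * w) ≤ (1 / 2) ^ (2 * expectedPrivate A Y X x) :=
    Real.rpow_le_rpow_of_exponent_ge (by norm_num) (by norm_num) (by linarith [hw x hx])
  linarith

theorem exists_typical_subset {w : ℕ} {b : ℝ} (hw : 0 < w) (hY : (#Y : ℝ) ≤ w * b)
    (hX : ∀ J ∈ irredundantSubsets A Y X, #J + 2 * b ≤ #X) :
    ∃ B ⊆ X, b ≤ #B ∧ ∀ x ∈ B, (∀ y ∈ Y, A y ∩ X ≠ {x}) ∧ expectedPrivate A Y X x ≤ w := by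
  have hw' : (0 : ℝ) < w := mod_cast hw
  set P := {x ∈ X | ∃ y ∈ Y, A y ∩ X = {x}}
  set H := {x ∈ X | (w : ℝ) < expectedPrivate A Y X x}
  have hP : #P + 2 * b ≤ #X := hX P filter_private_mem_irredundantSubsets
  have hH : (#H : ℝ) ≤ b := by
    refine le_of_mul_le_mul_right ?_ hw'
    calc (#H : ℝ) * w ≤ ∑ x ∈ X, expectedPrivate A Y X x :=
          card_filter_lt_mul_le_sum (fun x _ ↦ expectedPrivate_nonneg x) _
      _ ≤ #Y := sum_expectedPrivate_le
      _ ≤ b * w := by linarith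
  have hcard : #X ≤ #(X \ (P ∪ H)) + (#P + #H) :=
    (card_le_card_sdiff_add_card).trans (Nat.add_le_add_left (card_union_le P H) _)
  have hcard' : (#X : ℝ) ≤ #(X \ (P ∪ H)) + (#P + #H) := mod_cast hcard
  refine ⟨X \ (P ∪ H), sdiff_subset, by linarith, fun x hx ↦ ?_⟩
  simp only [P, H, mem_sdiff, mem_union, mem_filter, not_or, not_and, not_exists, not_lt] at hx
  exact ⟨hx.2.1 hx.1, hx.2.2 hx.1⟩

theorem card_irredundantSubsets_le_of_degrees_le {D e w : ℕ} {b : ℝ} (hw : 0 < w)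
    (hD : ∀ y ∈ Y, #(A y ∩ X) ≤ D) (he : ∀ x ∈ X, #{y ∈ Y | x ∈ A y} ≤ e)
    (hY : (#Y : ℝ) ≤ w * b) (hX : ∀ J ∈ irredundantSubsets A Y X, #J + 2 * b ≤ #X) :
    (#(irredundantSubsets A Y X) : ℝ) ≤
      2 ^ #X * Real.exp (-(b / (2 ^ (2 * w + 1) * (1 + e * D) ^ 2))) := by
  obtain ⟨B, hBX, hbB, hB⟩ := exists_typical_subset hw hY hX
  obtain ⟨I, hIB, hdisj, hBI⟩ := exists_pairwiseDisjoint_subset_card_le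
    (fun x hx ↦ mem_cluster_self (A := A) (Y := Y) (hBX hx))
    (fun x hx z ↦ mem_cluster_symm (hBX hx))
    (fun x _ z hz ↦ card_cluster_le hD (he z (cluster_subset x hz)))
  have hIcard : b ≤ #I * (1 + e * D) ^ 2 := hbB.trans (mod_cast hBI)
  have hcount := card_irredundantSubsets_le_of_disjoint_clusters (hIB.trans hBX) hdisj
    (fun x hx ↦ (hB x (hIB hx)).1) (fun x hx ↦ (hB x (hIB hx)).2) (Nat.cast_nonneg w)
  have hp : 1 / 2 * (1 / 2 : ℝ) ^ (2 * (w : ℝ)) = 1 / 2 ^ (2 * w + 1) := by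
    rw [show 2 * (w : ℝ) = ((2 * w : ℕ) : ℝ) by push_cast; rfl, Real.rpow_natCast,
      one_div_pow, pow_succ]
    field_simp
  rw [hp] at hcount
  refine hcount.trans ?_
  gcongr
  have hp₁ : (1 : ℝ) / 2 ^ (2 * w + 1) ≤ 1 :=
    div_le_one_of_le₀ (one_le_pow₀ (by norm_num)) (by positivity)
  calc (1 - 1 / 2 ^ (2 * w + 1) : ℝ) ^ #I ≤ Real.exp (-(1 / 2 ^ (2 * w + 1))) ^ #I :=
        pow_le_pow_left₀ (by linarith) (Real.one_sub_le_exp_neg _) _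
    _ = Real.exp (-(#I / 2 ^ (2 * w + 1))) := by rw [← Real.exp_nat_mul]; congr 1; ring
    _ ≤ Real.exp (-(b / (2 ^ (2 * w + 1) * (1 + e * D) ^ 2))) := by
        rw [Real.exp_le_exp, neg_le_neg_iff, div_le_div_iff₀ (by positivity) (by positivity)]
        nlinarith [mul_le_mul_of_nonneg_right hIcard (pow_nonneg zero_le_two (2 * w + 1))]

theorem card_filter_lt_degree_mul_le {D : ℕ} (hD : ∀ y ∈ Y, #(A y ∩ X) ≤ D) (e : ℕ) :
    #{x ∈ X | e < #{y ∈ Y | x ∈ A y}} * e ≤ #Y * D := by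
  calc #{x ∈ X | e < #{y ∈ Y | x ∈ A y}} * e ≤ ∑ x ∈ X, #{y ∈ Y | x ∈ A y} :=
        card_filter_lt_mul_le_sum (fun _ _ ↦ Nat.zero_le _) e
    _ = ∑ y ∈ Y, #(A y ∩ X) := by simp only [card_eq_sum_ones, sum_sum_filter_mem]
    _ ≤ #Y * D := sum_le_card_nsmul Y _ D hD

theorem card_irredundantSubsets_le_of_degree_le {D w : ℕ} {b : ℝ} (hw : 0 < w) (hD₀ : 0 < D)
    (hD : ∀ y ∈ Y, #(A y ∩ X) ≤ D) (hY : (#Y : ℝ) ≤ w * b)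
    (hX : ∀ J ∈ irredundantSubsets A Y X, #J + 3 * b ≤ #X) :
    (#(irredundantSubsets A Y X) : ℝ) ≤
      2 ^ #X * Real.exp (-(b / (2 ^ (2 * w + 1) * (1 + w * D ^ 2) ^ 2))) := by
  set R := {x ∈ X | w * D < #{y ∈ Y | x ∈ A y}}
  have hR : (#R : ℝ) ≤ b := by
    have hcount : (#R : ℝ) * (w * D) ≤ #Y * D := mod_cast card_filter_lt_degree_mul_le hD (w * D)
    have hwD : (0 : ℝ) < w * D := mod_cast Nat.mul_pos hw hD₀
    refine le_of_mul_le_mul_right (hcount.trans ?_) hwD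
    nlinarith [mul_le_mul_of_nonneg_right hY (Nat.cast_nonneg D)]
  have hcard : #(X \ R) + #R = #X := card_sdiff_add_card_eq_card (filter_subset _ _)
  have hcard' : (#(X \ R) : ℝ) + #R = #X := mod_cast hcard
  have hrest := card_irredundantSubsets_le_of_degrees_le (A := A) (X := X \ R) hw
    (fun y hy ↦ (card_le_card (inter_subset_inter_left sdiff_subset)).trans (hD y hy))
    (e := w * D) (fun x hx ↦ by
      simp only [R, mem_sdiff, mem_filter, not_and, not_lt] at hx
      exact hx.2 hx.1) hY
    (fun J hJ ↦ by linarith [hX J (irredundantSubsets_mono Subset.rfl sdiff_subset hJ)])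
  rw [Nat.cast_mul, mul_assoc, ← pow_two] at hrest
  calc (#(irredundantSubsets A Y X) : ℝ) ≤ 2 ^ #R * #(irredundantSubsets A Y (X \ R)) :=
        mod_cast card_irredundantSubsets_le_two_pow_mul_sdiff R
    _ ≤ 2 ^ #R * (2 ^ #(X \ R) * Real.exp (-(b / (2 ^ (2 * w + 1) * (1 + w * D ^ 2) ^ 2)))) := by
        gcongr
    _ = 2 ^ #X * Real.exp (-(b / (2 ^ (2 * w + 1) * (1 + w * D ^ 2) ^ 2))) := by
        rw [← hcard, pow_add]; ring

/-- The part of `X` covered by the sets `A y` with `y ∈ T`. -/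
def coveredPart (A : β → Finset α) (X : Finset α) (T : Finset β) : Finset α :=
  T.biUnion fun y ↦ A y ∩ X

theorem coveredPart_subset (T : Finset β) : coveredPart A X T ⊆ X :=
  biUnion_subset.2 fun _ _ ↦ inter_subset_right

theorem card_inter_coveredPart_le {J : Finset α} {T : Finset β} (hT : ∀ y ∈ T, #(A y ∩ J) ≤ 1) :
    #(J ∩ coveredPart A X T) ≤ #T := by
  rw [coveredPart, inter_biUnion]
  refine (card_biUnion_le_card_mul T _ 1 fun y hy ↦ ?_).trans_eq (mul_one _)
  refine (card_le_card fun x hx ↦ ?_).trans (hT y hy)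
  simp only [mem_inter] at hx ⊢
  exact ⟨hx.2.1, hx.1⟩

theorem exists_subset_mul_card_le_card_coveredPart (P : Finset β) (D : ℕ) :
    ∃ T ⊆ P, D * #T ≤ #(coveredPart A X T) ∧
      ∀ y ∈ P, #(A y ∩ (X \ coveredPart A X T)) ≤ D := by
  classical
  obtain ⟨T, hT, hmax⟩ := exists_max_image
    (P.powerset.filter fun T ↦ D * #T ≤ #(coveredPart A X T)) card ⟨∅, by simp⟩
  simp only [mem_filter, mem_powerset] at hT hmax
  refine ⟨T, hT.1, hT.2, fun y hy ↦ le_of_not_gt fun hlarge ↦ ?_⟩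
  rw [← inter_sdiff_assoc] at hlarge
  have hyT : y ∉ T := fun hyT ↦ by
    have hsub : A y ∩ X ⊆ coveredPart A X T := subset_biUnion_of_mem (fun y ↦ A y ∩ X) hyT
    simp [sdiff_eq_empty_iff_subset.2 hsub] at hlarge
  have hcard : #(coveredPart A X (insert y T)) =
      #((A y ∩ X) \ coveredPart A X T) + #(coveredPart A X T) := by
    rw [coveredPart, biUnion_insert, ← coveredPart, card_sdiff_add_card]
  have hle := hmax (insert y T) ⟨insert_subset hy hT.1, by
    rw [hcard, card_insert_of_notMem hyT, mul_add_one, add_comm]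
    exact Nat.add_le_add hlarge.le hT.2⟩
  rw [card_insert_of_notMem hyT] at hle
  lia

/-- The irredundant subsets `J` of `X` compatible with the choice of `T ⊆ Y` as the set of indices
of large degree: `J` has few elements in the part covered by `T`, and outside that part every index
private to `J` has degree at most `D`. -/
def branch (A : β → Finset α) (Y : Finset β) (X : Finset α) (D : ℕ) (T : Finset β) :
    Finset (Finset α) :=
  {J ∈ irredundantSubsets A Y X | #(J ∩ coveredPart A X T) ≤ #T ∧
    ∀ y ∈ Y, #(A y ∩ J) = 1 → #(A y ∩ (X \ coveredPart A X T)) ≤ D}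

theorem irredundantSubsets_subset_biUnion_branch (D : ℕ) :
    irredundantSubsets A Y X ⊆
      {T ∈ Y.powerset | D * #T ≤ #(coveredPart A X T)}.biUnion (branch A Y X D) := by
  intro J hJ
  obtain ⟨T, hTP, hT, hdegree⟩ :=
    exists_subset_mul_card_le_card_coveredPart (A := A) (X := X) {y ∈ Y | #(A y ∩ J) = 1} D
  refine mem_biUnion.2 ⟨T, mem_filter.2 ⟨mem_powerset.2 (hTP.trans (filter_subset _ _)), hT⟩,
    mem_filter.2 ⟨hJ, card_inter_coveredPart_le fun y hy ↦ (mem_filter.1 (hTP hy)).2.le,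
      fun y hy hprivate ↦ hdegree y (mem_filter.2 ⟨hy, hprivate⟩)⟩⟩

theorem card_branch_le_mul (D : ℕ) (T : Finset β) :
    #(branch A Y X D T) ≤ #{K ∈ (coveredPart A X T).powerset | #K ≤ #T} *
      #(irredundantSubsets A {y ∈ Y | #(A y ∩ (X \ coveredPart A X T)) ≤ D}
        (X \ coveredPart A X T)) := by
  refine card_le_card_mul_card_of_inter_of_sdiff (U := coveredPart A X T)
    (fun J hJ ↦ ?_) fun J hJ ↦ ?_
  · exact mem_filter.2 ⟨mem_powerset.2 inter_subset_right, (mem_filter.1 hJ).2.1⟩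
  · obtain ⟨hJ, _, hdegree⟩ := mem_filter.1 hJ
    exact mem_irredundantSubsets_of_subset hJ sdiff_subset
      (sdiff_subset_sdiff (mem_irredundantSubsets.1 hJ).1 Subset.rfl)
      fun y hy hprivate ↦ mem_filter.2 ⟨hy, hdegree y hy hprivate⟩

/-- The bound on the size of a branch loses this factor for every element of `T`; it is
`8 * (3 / 4) ^ (192 * s)` with `(3 / 4) ^ 3` rounded up to `1 / 2`. -/
noncomputable def branchWeight (s : ℕ) : ℝ := 8 / 2 ^ (64 * s)

theorem branchWeight_nonneg (s : ℕ) : 0 ≤ branchWeight s := by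
  rw [branchWeight]
  positivity

theorem mul_two_pow_mul_sq_le_two_pow {s : ℕ} (hs : 0 < s) :
    192 * s * 2 ^ (12 * s) * (1 + 6 * s * (192 * s) ^ 2) ^ 2 ≤ 2 ^ (64 * s) := by
  have hbase : 1 + 6 * s * (192 * s) ^ 2 ≤ 2 ^ 18 * s ^ 3 := by
    have hcube : 1 ≤ s ^ 3 := Nat.one_le_pow _ _ hs
    lia
  calc 192 * s * 2 ^ (12 * s) * (1 + 6 * s * (192 * s) ^ 2) ^ 2
      ≤ 2 ^ 8 * s * 2 ^ (12 * s) * (2 ^ 18 * s ^ 3) ^ 2 := by gcongr; norm_num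
    _ = 2 ^ 44 * s ^ 7 * 2 ^ (12 * s) := by ring
    _ ≤ 2 ^ (44 * s) * (2 ^ s) ^ 7 * 2 ^ (12 * s) := by
        gcongr
        · norm_num
        · exact Nat.le_mul_of_pos_right 44 hs
        · exact Nat.lt_two_pow_self.le
    _ = 2 ^ (63 * s) := by rw [← pow_mul, ← pow_add, ← pow_add]; congr 1; ring
    _ ≤ 2 ^ (64 * s) := by gcongr <;> norm_num

theorem two_mul_branchWeight_mul_le {s : ℕ} (hs : 0 < s) :
    2 * branchWeight s * s ≤
      1 / 6 / (2 ^ (2 * (6 * s) + 1) * (1 + 6 * s * (192 * s) ^ 2) ^ 2) := by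
  have hnum : (192 * s * 2 ^ (12 * s) * (1 + 6 * s * (192 * s) ^ 2) ^ 2 : ℝ) ≤ 2 ^ (64 * s) :=
    mod_cast mul_two_pow_mul_sq_le_two_pow hs
  rw [branchWeight, div_div, show 2 * (8 / 2 ^ (64 * s)) * (s : ℝ) = 16 * s / 2 ^ (64 * s) by ring,
    div_le_div_iff₀ (by positivity) (by positivity), show 2 * (6 * s) = 12 * s by ring, pow_succ]
  linarith

theorem two_mul_branchWeight_mul_le_one_eighth {s : ℕ} (hs : 0 < s) :
    2 * branchWeight s * s ≤ 1 / 8 := by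
  have hnum : 128 * s ≤ 2 ^ (64 * s) :=
    calc 128 * s ≤ 2 ^ 7 * 2 ^ s := Nat.mul_le_mul_left _ Nat.lt_two_pow_self.le
      _ = 2 ^ (7 + s) := (pow_add 2 7 s).symm
      _ ≤ 2 ^ (64 * s) := Nat.pow_le_pow_right two_pos (by lia)
  have hnum' : (128 * s : ℝ) ≤ 2 ^ (64 * s) := mod_cast hnum
  rw [branchWeight, show 2 * (8 / 2 ^ (64 * s)) * (s : ℝ) = 16 * s / 2 ^ (64 * s) by ring,
    div_le_div_iff₀ (by positivity) (by positivity)]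
  linarith

theorem three_quarters_pow_mul_card_irredundantSubsets_sdiff_le {s : ℕ} {m : ℝ} (hs : 0 < s)
    {U : Finset α} (hU : U ⊆ X) (hD : ∀ y ∈ Y, #(A y ∩ (X \ U)) ≤ 192 * s)
    (hY : (#Y : ℝ) ≤ s * m) (hX : ∀ J ∈ irredundantSubsets A Y X, #J + m ≤ #X) :
    (3 / 4 : ℝ) ^ #U * #(irredundantSubsets A Y (X \ U)) ≤
      2 ^ #(X \ U) * Real.exp (-(2 * branchWeight s * s * m)) := by
  have hm : 0 ≤ m := nonneg_of_mul_nonneg_right ((Nat.cast_nonneg _).trans hY) (mod_cast hs)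
  -- A small `U` costs only half of the deficiency `m`; a large one makes `(3 / 4) ^ #U` tiny.
  rcases le_or_gt (2 * (#U : ℝ)) m with hsmall | hlarge
  · have hcard : (#(X \ U) : ℝ) + #U = #X := mod_cast card_sdiff_add_card_eq_card hU
    have hrest := card_irredundantSubsets_le_of_degree_le (w := 6 * s) (b := m / 6) (by lia)
      (by lia) hD (by push_cast; linarith)
      (fun J hJ ↦ by linarith [hX J (irredundantSubsets_mono Subset.rfl sdiff_subset hJ)])
    have hpow : (3 / 4 : ℝ) ^ #U ≤ 1 := pow_le_one₀ (by norm_num) (by norm_num)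
    refine (mul_le_of_le_one_left (Nat.cast_nonneg _) hpow).trans (hrest.trans ?_)
    gcongr 2 ^ #(X \ U) * Real.exp (-?_)
    calc 2 * branchWeight s * s * m
        ≤ 1 / 6 / (2 ^ (2 * (6 * s) + 1) * (1 + 6 * s * (192 * s) ^ 2) ^ 2) * m := by
          gcongr
          exact two_mul_branchWeight_mul_le hs
      _ = m / 6 / (2 ^ (2 * (6 * s) + 1) * (1 + (6 * s : ℕ) * (192 * s : ℕ) ^ 2) ^ 2) := by
          push_cast
          ring
  · have hpow : (3 / 4 : ℝ) ^ #U ≤ Real.exp (-(2 * branchWeight s * s * m)) := by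
      calc (3 / 4 : ℝ) ^ #U ≤ Real.exp (-(1 / 4)) ^ #U := by
            gcongr
            linarith [Real.one_sub_le_exp_neg (1 / 4)]
        _ = Real.exp (-(#U / 4)) := by rw [← Real.exp_nat_mul]; congr 1; ring
        _ ≤ Real.exp (-(2 * branchWeight s * s * m)) := by
            gcongr
            nlinarith [mul_le_mul_of_nonneg_right (two_mul_branchWeight_mul_le_one_eighth hs) hm]
    rw [mul_comm]
    gcongr
    exact_mod_cast card_irredundantSubsets_le_two_pow (A := A) (Y := Y)

theorem eight_pow_mul_three_quarters_pow_le_branchWeight_pow {s t u : ℕ} (hu : 192 * s * t ≤ u) :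
    8 ^ t * (3 / 4 : ℝ) ^ u ≤ branchWeight s ^ t := by
  have hcube : (3 / 4 : ℝ) ^ 192 ≤ (1 / 2) ^ 64 := by
    rw [show 192 = 3 * 64 by rfl, pow_mul]
    gcongr
    norm_num
  calc 8 ^ t * (3 / 4 : ℝ) ^ u ≤ 8 ^ t * (3 / 4) ^ (192 * s * t) := by
        gcongr ?_ * ?_
        exact pow_le_pow_of_le_one (by norm_num) (by norm_num) hu
    _ = 8 ^ t * (((3 / 4) ^ 192) ^ s) ^ t := by rw [pow_mul, pow_mul]
    _ ≤ 8 ^ t * (((1 / 2) ^ 64) ^ s) ^ t := by gcongr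
    _ = branchWeight s ^ t := by rw [branchWeight, ← mul_pow, ← pow_mul, one_div_pow, mul_one_div]

theorem card_branch_le {s : ℕ} {m : ℝ} (hs : 0 < s) {T : Finset β}
    (hT : 192 * s * #T ≤ #(coveredPart A X T)) (hY : (#Y : ℝ) ≤ s * m)
    (hX : ∀ J ∈ irredundantSubsets A Y X, #J + m ≤ #X) :
    (#(branch A Y X (192 * s) T) : ℝ) ≤
      branchWeight s ^ #T * (2 ^ #X * Real.exp (-(2 * branchWeight s * s * m))) := by
  set U := coveredPart A X T
  set Y' := {y ∈ Y | #(A y ∩ (X \ U)) ≤ 192 * s}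
  have hsplit : (#(branch A Y X (192 * s) T) : ℝ) ≤
      #{K ∈ U.powerset | #K ≤ #T} * #(irredundantSubsets A Y' (X \ U)) :=
    mod_cast card_branch_le_mul (192 * s) T
  have hinside : (#{K ∈ U.powerset | #K ≤ #T} : ℝ) ≤ 8 ^ #T * (9 / 8) ^ #U := by
    have hsmall := pow_mul_card_filter_card_le (x := 1 / 8) (by norm_num) (by norm_num) U #T
    rw [one_div_pow, one_div_mul_eq_div, div_le_iff₀' (by positivity)] at hsmall
    norm_num at hsmall ⊢
    exact hsmall
  have houtside : (3 / 4 : ℝ) ^ #U * #(irredundantSubsets A Y' (X \ U)) ≤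
      2 ^ #(X \ U) * Real.exp (-(2 * branchWeight s * s * m)) :=
    three_quarters_pow_mul_card_irredundantSubsets_sdiff_le hs (coveredPart_subset T)
      (fun y hy ↦ (mem_filter.1 hy).2)
      ((Nat.cast_le.2 (card_le_card (filter_subset _ _))).trans hY)
      (fun J hJ ↦ hX J (irredundantSubsets_mono (filter_subset _ _) Subset.rfl hJ))
  have hcard : #(X \ U) + #U = #X := card_sdiff_add_card_eq_card (coveredPart_subset T)
  -- `9 / 8 = 2 * (3 / 4) * (3 / 4)`: one factor `3 / 4` pays outside `U`, the other pays for `T`.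
  calc (#(branch A Y X (192 * s) T) : ℝ)
      ≤ 8 ^ #T * (9 / 8) ^ #U * #(irredundantSubsets A Y' (X \ U)) := by
        refine hsplit.trans ?_
        gcongr
    _ = 8 ^ #T * (3 / 2) ^ #U * ((3 / 4) ^ #U * #(irredundantSubsets A Y' (X \ U))) := by
        rw [show (9 / 8 : ℝ) = 3 / 2 * (3 / 4) by norm_num, mul_pow]
        ring
    _ ≤ 8 ^ #T * (3 / 2) ^ #U *
        (2 ^ #(X \ U) * Real.exp (-(2 * branchWeight s * s * m))) := by gcongr
    _ = 8 ^ #T * (3 / 4) ^ #U * (2 ^ #X * Real.exp (-(2 * branchWeight s * s * m))) := by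
        rw [show (3 / 2 : ℝ) = 3 / 4 * 2 by norm_num, mul_pow, ← hcard, pow_add]
        ring
    _ ≤ branchWeight s ^ #T * (2 ^ #X * Real.exp (-(2 * branchWeight s * s * m))) := by
        gcongr
        exact eight_pow_mul_three_quarters_pow_le_branchWeight_pow hT

theorem card_irredundantSubsets_le {s : ℕ} {m : ℝ} (hs : 0 < s) (hY : (#Y : ℝ) ≤ s * m)
    (hX : ∀ J ∈ irredundantSubsets A Y X, #J + m ≤ #X) :
    (#(irredundantSubsets A Y X) : ℝ) ≤ 2 ^ #X * Real.exp (-(branchWeight s * s * m)) := by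
  have hq := branchWeight_nonneg s
  set bound := 2 ^ #X * Real.exp (-(2 * branchWeight s * s * m)) with hbound
  have : 0 ≤ bound := by positivity
  have hunion : (#(irredundantSubsets A Y X) : ℝ) ≤
      ∑ T ∈ Y.powerset with 192 * s * #T ≤ #(coveredPart A X T),
        (#(branch A Y X (192 * s) T) : ℝ) :=
    mod_cast (card_le_card (irredundantSubsets_subset_biUnion_branch _)).trans card_biUnion_le
  calc (#(irredundantSubsets A Y X) : ℝ)
      ≤ ∑ T ∈ Y.powerset with 192 * s * #T ≤ #(coveredPart A X T), branchWeight s ^ #T * bound :=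
        hunion.trans (sum_le_sum fun T hT ↦ card_branch_le hs (mem_filter.1 hT).2 hY hX)
    _ ≤ ∑ T ∈ Y.powerset, branchWeight s ^ #T * bound :=
        sum_le_sum_of_subset_of_nonneg (filter_subset _ _) fun _ _ _ ↦ by positivity
    _ = (branchWeight s + 1) ^ #Y * bound := by
        rw [← sum_mul]
        congr 1
        simpa using sum_pow_mul_eq_add_pow (branchWeight s) 1 Y
    _ ≤ Real.exp (branchWeight s) ^ #Y * bound := by
        gcongr
        exact Real.add_one_le_exp _
    _ ≤ Real.exp (branchWeight s * (s * m)) * bound := by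
        rw [← Real.exp_nat_mul, mul_comm (#Y : ℝ)]
        gcongr
    _ = 2 ^ #X * Real.exp (-(branchWeight s * s * m)) := by
        rw [hbound, mul_left_comm, ← Real.exp_add]
        congr 2
        ring

end IrredundantSubsets

section Graphs

open Finset

variable {V : Type*} {G : SimpleGraph V} {X Y : Finset V}

theorem nbhd_mono {S T : Set V} (h : S ⊆ T) : nbhd G S ⊆ nbhd G T :=
  fun _ ⟨x, hx, hxy⟩ ↦ ⟨x, h hx, hxy⟩

theorem mem_iff_notMem_nbhd_of_isMaxIndepSet {S : Set V} (hS : IsMaxIndepSet G S) {v : V} :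
    v ∈ S ↔ v ∉ nbhd G S := by
  refine ⟨fun hv ⟨u, hu, huv⟩ ↦ hS.1 hu hv huv, fun hv ↦ ?_⟩
  have hindep : IsIndepSet G (insert v S) := by
    rintro a (rfl | ha) b (rfl | hb) hab
    · exact hab.ne rfl
    · exact hv ⟨b, hb, hab.symm⟩
    · exact hv ⟨a, ha, hab⟩
    · exact hS.1 ha hb hab
  rw [hS.2 _ hindep (Set.subset_insert v S)]
  exact Set.mem_insert v S

theorem mem_iff_of_isMaxIndepSet (hG : G.IsBipartiteWith (X : Set V) (Y : Set V)) {S : Set V}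
    (hS : IsMaxIndepSet G S) {y : V} (hy : y ∈ Y) : y ∈ S ↔ y ∉ nbhd G (S ∩ X) := by
  rw [mem_iff_notMem_nbhd_of_isMaxIndepSet hS]
  refine not_congr ⟨fun ⟨x, hx, hxy⟩ ↦ ⟨x, ⟨hx, ?_⟩, hxy⟩, fun h ↦ ?_⟩
  · exact hG.symm.mem_of_mem_adj hy hxy.symm
  · exact nbhd_mono Set.inter_subset_left h

theorem eq_of_nbhd_inter_eq (hG : G.IsBipartiteWith (X : Set V) (Y : Set V)) {S T : Set V}
    (hS : IsMaxIndepSet G S) (hT : IsMaxIndepSet G T) (h : nbhd G (S ∩ X) = nbhd G (T ∩ X)) :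
    S = T := by
  have hY : ∀ y ∈ Y, (y ∈ S ↔ y ∈ T) := fun y hy ↦ by
    rw [mem_iff_of_isMaxIndepSet hG hS hy, mem_iff_of_isMaxIndepSet hG hT hy, h]
  ext v
  by_cases hv : v ∈ Y
  · exact hY v hv
  · have hadj : ∀ u, G.Adj u v → u ∈ Y := fun u huv ↦
      (hG.mem_of_adj huv).elim (fun h ↦ absurd h.2 hv) And.left
    rw [mem_iff_notMem_nbhd_of_isMaxIndepSet hS, mem_iff_notMem_nbhd_of_isMaxIndepSet hT]
    exact not_congr (exists_congr fun u ↦ and_congr_left fun huv ↦ hY u (hadj u huv))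

theorem exists_subset_irredundant_nbhd_eq (J : Finset V) :
    ∃ K ⊆ J, Irredundant G K ∧ nbhd G K = nbhd G J := by
  classical
  induction J using Finset.strongInduction with
  | H J ih =>
    by_cases hJ : Irredundant G J
    · exact ⟨J, Subset.rfl, hJ, rfl⟩
    · obtain ⟨x, hx, hcov⟩ : ∃ x ∈ J, G.neighborSet x ⊆ nbhd G (J \ {x} : Set V) := by
        simpa [Irredundant] using hJ
      obtain ⟨K, hKJ, hK, hnbhd⟩ := ih (J.erase x) (erase_ssubset hx)
      refine ⟨K, hKJ.trans (erase_subset x J), hK, hnbhd.trans ?_⟩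
      rw [coe_erase]
      refine (nbhd_mono Set.sdiff_subset).antisymm fun y ⟨z, hz, hzy⟩ ↦ ?_
      by_cases hzx : z = x
      · exact hcov (hzx ▸ hzy)
      · exact ⟨z, ⟨hz, hzx⟩, hzy⟩

theorem card_le_add_of_isInducedMatching (hG : G.IsBipartiteWith (X : Set V) (Y : Set V))
    {S : Finset V} (hS : IsInducedMatching G S) : #S ≤ #X + #Y := by
  classical
  refine (card_le_card fun v hv ↦ mem_union.2 ?_).trans (card_union_le X Y)
  obtain ⟨u, _, hvu, _⟩ := hS v hv
  exact (hG.mem_of_adj hvu).imp And.left And.left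

theorem le_im_of_isInducedMatching (hG : G.IsBipartiteWith (X : Set V) (Y : Set V)) {S : Finset V}
    {k : ℕ} (hk : #S = 2 * k) (hS : IsInducedMatching G S) : k ≤ im G := by
  refine le_csSup ⟨#X + #Y, ?_⟩ ⟨S, hk, hS⟩
  rintro l ⟨T, hl, hT⟩
  linarith [card_le_add_of_isInducedMatching hG hT]

variable [DecidableEq V] [DecidableRel G.Adj]

/-- The neighbours of `y` in `X`, the set system through which a bipartite graph is seen by
`irredundantSubsets`. -/
def neighborsIn (G : SimpleGraph V) [DecidableRel G.Adj] (X : Finset V) (y : V) : Finset V :=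
  {x ∈ X | G.Adj y x}

theorem neighborsIn_inter_eq_singleton_iff {J : Finset V} (hJ : J ⊆ X) {x y : V} (hx : x ∈ J) :
    neighborsIn G X y ∩ J = {x} ↔ G.Adj x y ∧ ∀ z ∈ J, G.Adj z y → z = x := by
  simp only [eq_singleton_iff_unique_mem, neighborsIn, mem_inter, mem_filter, G.adj_comm y]
  exact ⟨fun h ↦ ⟨h.1.1.2, fun z hz hzy ↦ h.2 z ⟨⟨hJ hz, hzy⟩, hz⟩⟩,
    fun h ↦ ⟨⟨⟨hJ hx, h.1⟩, hx⟩, fun z hz ↦ h.2 z hz.2 hz.1.2⟩⟩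

theorem mem_irredundantSubsets_of_irredundant (hG : G.IsBipartiteWith (X : Set V) (Y : Set V))
    {J : Finset V} (hJX : J ⊆ X) (hJ : Irredundant G J) :
    J ∈ irredundantSubsets (neighborsIn G X) Y X := by
  refine mem_irredundantSubsets.2 ⟨hJX, fun x hx ↦ ?_⟩
  obtain ⟨y, hxy, hy⟩ := Set.not_subset.1 (hJ x hx)
  refine ⟨y, hG.mem_of_mem_adj (hJX hx) hxy,
    (neighborsIn_inter_eq_singleton_iff hJX hx).2 ⟨hxy, fun z hz hzy ↦ ?_⟩⟩
  by_contra hzx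
  exact hy ⟨z, ⟨hz, hzx⟩, hzy⟩

theorem mis_le_card_irredundantSubsets (hG : G.IsBipartiteWith (X : Set V) (Y : Set V)) :
    mis G ≤ #(irredundantSubsets (neighborsIn G X) Y X) := by
  classical
  have htrace : ∀ S : {S : Set V // IsMaxIndepSet G S},
      ∃ K ∈ irredundantSubsets (neighborsIn G X) Y X, nbhd G K = nbhd G (S ∩ X) := by
    intro S
    obtain ⟨K, hK, hirr, hnbhd⟩ := exists_subset_irredundant_nbhd_eq (G := G) {x ∈ X | x ∈ S.1}
    refine ⟨K, mem_irredundantSubsets_of_irredundant hG (hK.trans (filter_subset _ _)) hirr, ?_⟩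
    rw [hnbhd, coe_filter, Set.inter_comm]
    rfl
  choose K hK hnbhd using htrace
  have hinj : Function.Injective fun S ↦
      (⟨K S, hK S⟩ : irredundantSubsets (neighborsIn G X) Y X) := fun S T hST ↦ by
    refine Subtype.ext (eq_of_nbhd_inter_eq hG S.2 T.2 ?_)
    rw [← hnbhd S, ← hnbhd T, Subtype.mk.inj hST]
  exact (Nat.card_le_card_of_injective _ hinj).trans_eq (Nat.card_eq_finsetCard _)

theorem card_le_im_of_mem_irredundantSubsets (hG : G.IsBipartiteWith (X : Set V) (Y : Set V))
    {J : Finset V} (hJ : J ∈ irredundantSubsets (neighborsIn G X) Y X) : #J ≤ im G := by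
  obtain ⟨hJX, hprivate⟩ := mem_irredundantSubsets.1 hJ
  choose! f hfY hf using hprivate
  have hadj : ∀ x ∈ J, G.Adj x (f x) := fun x hx ↦
    ((neighborsIn_inter_eq_singleton_iff hJX hx).1 (hf x hx)).1
  have hunique : ∀ x ∈ J, ∀ z ∈ J, G.Adj z (f x) → z = x := fun x hx ↦
    ((neighborsIn_inter_eq_singleton_iff hJX hx).1 (hf x hx)).2
  have hinj : Set.InjOn f J := fun x hx z hz h ↦ hunique z hz x hx (h ▸ hadj x hx)
  have himage : J.image f ⊆ Y := image_subset_iff.2 hfY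
  have hXY : Disjoint X Y := disjoint_coe.1 hG.disjoint
  have hdisj : Disjoint J (J.image f) := hXY.mono hJX himage
  refine le_im_of_isInducedMatching hG (S := J ∪ J.image f) ?_ fun v hv ↦ ?_
  · rw [card_union_of_disjoint hdisj, card_image_of_injOn hinj, two_mul]
  have hside : ∀ z ∈ J ∪ J.image f, (z ∈ Y → z ∈ J.image f) ∧ (z ∈ X → z ∈ J) := fun z hz ↦ by
    rcases mem_union.1 hz with hzJ | hzJ
    · exact ⟨fun hzY ↦ (disjoint_left.1 hXY (hJX hzJ) hzY).elim, fun _ ↦ hzJ⟩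
    · exact ⟨fun _ ↦ hzJ, fun hzX ↦ (disjoint_left.1 hXY hzX (himage hzJ)).elim⟩
  rcases mem_union.1 hv with hvJ | hvJ
  · refine ⟨f v, mem_union_right _ (mem_image_of_mem f hvJ), hadj v hvJ, fun z hz hvz ↦ ?_⟩
    obtain ⟨x, hx, rfl⟩ := mem_image.1 ((hside z hz).1 (hG.mem_of_mem_adj (hJX hvJ) hvz))
    rw [hunique x hx v hvJ hvz]
  · obtain ⟨x, hx, rfl⟩ := mem_image.1 hvJ
    refine ⟨x, mem_union_left _ hx, (hadj x hx).symm, fun z hz hz_adj ↦ ?_⟩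
    exact hunique x hx z ((hside z hz).2 (hG.symm.mem_of_mem_adj (hfY x hx) hz_adj)) hz_adj.symm

end Graphs

theorem logb_two_lt_of_le_two_pow_mul_exp {N n : ℕ} {δ : ℝ} (hn : 0 < n) (hδ₀ : 0 < δ)
    (hδ₁ : δ < 1) (hN : (N : ℝ) ≤ 2 ^ n * Real.exp (-(δ * n))) :
    Real.logb 2 N < (1 - δ) * n := by
  have hn' : (0 : ℝ) < n := mod_cast hn
  rcases N.eq_zero_or_pos with rfl | hNpos
  · simpa using mul_pos (sub_pos.2 hδ₁) hn'
  have hlog : Real.log N ≤ n * Real.log 2 - δ * n := by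
    calc Real.log N ≤ Real.log (2 ^ n * Real.exp (-(δ * n))) :=
          Real.log_le_log (mod_cast hNpos) hN
      _ = n * Real.log 2 - δ * n := by
          rw [Real.log_mul (by positivity) (by positivity), Real.log_pow, Real.log_exp,
            sub_eq_add_neg]
  rw [Real.logb, div_lt_iff₀ (Real.log_pos one_lt_two)]
  nlinarith [mul_pos hδ₀ hn', Real.log_two_lt_d9]

theorem two_rpow_neg_le_branchWeight {s : ℕ} {t : ℝ} (hs : 64 * s ≤ t) :
    (2 : ℝ) ^ (-t) ≤ branchWeight s := by
  calc (2 : ℝ) ^ (-t) ≤ 2 ^ (-((64 * s : ℕ) : ℝ)) := by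
        gcongr
        · norm_num
        · push_cast
          exact hs
    _ = 1 / 2 ^ (64 * s) := by rw [Real.rpow_neg zero_le_two, Real.rpow_natCast, one_div]
    _ ≤ branchWeight s := by
        rw [branchWeight]
        gcongr
        norm_num

theorem stability_unbalanced_mis_general {V : Type*} {G : SimpleGraph V} {X Y : Finset V}
    {r ε : ℝ} (hG : G.IsBipartiteWith (X : Set V) (Y : Set V)) (hr : 1 ≤ r) (hε : 0 < ε)
    (hY : (Y.card : ℝ) ≤ r * X.card) (him : (im G : ℝ) < (1 - ε) * X.card) :
    Real.logb 2 (mis G) < (1 - 2 ^ (-(128 * r / ε))) * X.card := by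
  classical
  obtain ⟨hε₁, hX₀⟩ := (pos_and_pos_or_neg_and_neg_of_mul_pos
    ((Nat.cast_nonneg _).trans_lt him)).resolve_right fun h ↦ (Nat.cast_nonneg _).not_gt h.2
  set s := ⌈r / ε⌉₊
  have hs : 0 < s := Nat.ceil_pos.2 (by positivity)
  have hsε : r ≤ s * ε := (div_le_iff₀ hε).1 (Nat.le_ceil _)
  have hs_le : 64 * (s : ℝ) ≤ 128 * r / ε := by
    have hone : 1 ≤ r / ε := (one_le_div hε).2 (by linarith)
    rw [mul_div_assoc]
    linarith [Nat.ceil_lt_add_one (zero_le_one.trans hone)]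
  have hirr := card_irredundantSubsets_le (A := neighborsIn G X) (Y := Y) (X := X) (m := ε * X.card)
    hs (by nlinarith) fun J hJ ↦ by
      linarith [(Nat.cast_le (α := ℝ)).2 (card_le_im_of_mem_irredundantSubsets hG hJ)]
  refine logb_two_lt_of_le_two_pow_mul_exp (mod_cast hX₀) (by positivity)
    (Real.rpow_lt_one_of_one_lt_of_neg one_lt_two (by rw [neg_lt_zero]; positivity)) ?_
  refine (Nat.cast_le.2 (mis_le_card_irredundantSubsets hG)).trans (hirr.trans ?_)
  gcongr 2 ^ X.card * Real.exp (-?_)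
  calc 2 ^ (-(128 * r / ε)) * (X.card : ℝ) ≤ branchWeight s * X.card := by
        gcongr
        exact two_rpow_neg_le_branchWeight hs_le
    _ ≤ branchWeight s * (s * ε * X.card) := by
        gcongr
        · exact branchWeight_nonneg s
        · exact le_mul_of_one_le_left hX₀.le (hr.trans hsε)
    _ = branchWeight s * s * (ε * X.card) := by ring

theorem stability_unbalanced_mis :
    ∃ C : ℝ, 0 < C ∧ ∀ ε : ℝ, 0 < ε → ∃ δ : ℝ, 0 < δ ∧ (2 : ℝ) ^ (-(C / ε)) ≤ δ ∧
      ∀ (V : Type) [Fintype V] (G : SimpleGraph V) (X Y : Finset V) (n : ℕ),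
        Disjoint X Y → (∀ v : V, v ∈ X ∨ v ∈ Y) →
        (∀ a b : V, G.Adj a b → (a ∈ X ∧ b ∈ Y) ∨ (a ∈ Y ∧ b ∈ X)) →
        X.card = n → Y.card = 2 * n →
        (im G : ℝ) < (1 - ε) * (n : ℝ) →
        Real.logb 2 (mis G) < (1 - δ) * (n : ℝ) := by
  refine ⟨128 * 2, by norm_num, fun ε hε ↦ ⟨2 ^ (-(128 * 2 / ε)), by positivity, le_rfl, ?_⟩⟩
  rintro V _ G X Y _ hXY - hadj rfl hY him
  exact stability_unbalanced_mis_general ⟨Finset.disjoint_coe.2 hXY, fun {a b} ↦ hadj a b⟩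
    one_le_two hε (by simp [hY]) him
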